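/- arXiv:2106.05200 — 6 statements merged into one kernel-verified Lean document; each statement's English description precedes it below -/
import Mathlib

section
/- Let f: ℝⁿ → ℝⁿ be a smooth diffeomorphism, P ∈ ℝ^{n×n} a permutation matrix, and h(s) = (h_1(s_1), …, h_n(s_n)) an element-wise smooth diffeomorphism of ℝⁿ with nowhere-vanishing derivatives h_i'. Let p be a probability density on ℝⁿ, define f̃ := f ∘ h⁻¹ ∘ P⁻¹ and let p̃ be the pushforward density of p under the map s ↦ P h(s). Then the global IMA contrasts agree: C_IMA(f̃, p̃) = C_IMA(f, p). -/
open Matrix MeasureTheory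

/-- Euclidean norm of the `i`-th column of `W`. -/
noncomputable def colNorm {n : ℕ} (W : Matrix (Fin n) (Fin n) ℝ) (i : Fin n) : ℝ :=
  Real.sqrt (∑ j, (W j i) ^ 2)

/-- Local IMA contrast of a matrix. -/
noncomputable def cIMA {n : ℕ} (W : Matrix (Fin n) (Fin n) ℝ) : ℝ :=
  (∑ i, Real.log (colNorm W i)) - Real.log |W.det|

/-- Jacobian matrix of `f : ℝⁿ → ℝⁿ` at `s`; its `j`-th column is `∂f/∂s_j (s)`. -/
noncomputable def jacobian {n : ℕ} (f : (Fin n → ℝ) → (Fin n → ℝ)) (s : Fin n → ℝ) :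
    Matrix (Fin n) (Fin n) ℝ :=
  Matrix.of fun i j => fderiv ℝ f s (Pi.single j 1) i

/-- Global IMA contrast of `f` with respect to a probability density `p`. -/
noncomputable def CIMA {n : ℕ} (f : (Fin n → ℝ) → (Fin n → ℝ))
    (p : (Fin n → ℝ) → ℝ) : ℝ :=
  ∫ s, cIMA (jacobian f s) * p s

theorem jacobian_eq_toMatrix {n : ℕ} (f : (Fin n → ℝ) → (Fin n → ℝ)) (s : Fin n → ℝ) :
    jacobian f s = LinearMap.toMatrix' (fderiv ℝ f s : (Fin n → ℝ) →ₗ[ℝ] (Fin n → ℝ)) := by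
  ext i j
  simp [jacobian, LinearMap.toMatrix'_apply]

theorem det_jacobian {n : ℕ} (f : (Fin n → ℝ) → (Fin n → ℝ)) (s : Fin n → ℝ) :
    (jacobian f s).det = (fderiv ℝ f s).det := by
  rw [jacobian_eq_toMatrix, LinearMap.det_toMatrix']

theorem jacobian_comp {n : ℕ} (g f : (Fin n → ℝ) → (Fin n → ℝ)) (s : Fin n → ℝ)
    (hg : DifferentiableAt ℝ g (f s)) (hf : DifferentiableAt ℝ f s) :
    jacobian (g ∘ f) s = jacobian g (f s) * jacobian f s := by
  rw [jacobian_eq_toMatrix, jacobian_eq_toMatrix, jacobian_eq_toMatrix, fderiv_comp s hg hf,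
    ← LinearMap.toMatrix'_comp]
  rfl

theorem colNorm_ne_zero {n : ℕ} (V : Matrix (Fin n) (Fin n) ℝ) (hV : V.det ≠ 0) (i : Fin n) :
    colNorm V i ≠ 0 := by
  intro h0
  apply hV
  apply Matrix.det_eq_zero_of_column_eq_zero i
  intro j
  have hs : 0 ≤ ∑ j, (V j i) ^ 2 := Finset.sum_nonneg fun _ _ => sq_nonneg _
  have h1 := (Real.sqrt_eq_zero hs).1 h0
  have h2 := (Finset.sum_eq_zero_iff_of_nonneg fun _ _ => sq_nonneg _).1 h1 j (Finset.mem_univ j)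
  exact pow_eq_zero_iff (two_ne_zero) |>.1 h2

theorem cIMA_reparam {n : ℕ} (W V : Matrix (Fin n) (Fin n) ℝ) (d : Fin n → ℝ)
    (τ : Equiv.Perm (Fin n)) (hW : ∀ i j, W i j = V i (τ j) * d j) (hdet : W.det ≠ 0) :
    cIMA W = cIMA V := by
  have hWe : W = V.submatrix id τ * Matrix.diagonal d := by
    ext i j
    simp [hW, Matrix.mul_diagonal]
  have hd : |W.det| = |V.det| * ∏ i, |d i| := by
    rw [hWe, Matrix.det_mul, Matrix.det_permute', Matrix.det_diagonal, abs_mul, abs_mul,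
      Finset.abs_prod]
    rcases Int.units_eq_one_or (Equiv.Perm.sign τ) with h | h <;> simp [h]
  have habs : |V.det| * ∏ i, |d i| ≠ 0 := by rw [← hd]; simpa using hdet
  have hV : V.det ≠ 0 := by simpa using left_ne_zero_of_mul habs
  have hdp : ∀ i, |d i| ≠ 0 := fun i =>
    Finset.prod_ne_zero_iff.1 (right_ne_zero_of_mul habs) i (Finset.mem_univ i)
  have hcol : ∀ j, colNorm W j = colNorm V (τ j) * |d j| := by
    intro j
    unfold colNorm
    simp_rw [hW, mul_pow]
    rw [← Finset.sum_mul, Real.sqrt_mul' _ (sq_nonneg _), Real.sqrt_sq_eq_abs]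
  unfold cIMA
  rw [hd, Real.log_mul (left_ne_zero_of_mul habs) (right_ne_zero_of_mul habs),
    Real.log_prod (fun i _ => hdp i)]
  have : ∀ j, Real.log (colNorm W j) = Real.log (colNorm V (τ j)) + Real.log |d j| := by
    intro j
    rw [hcol, Real.log_mul (colNorm_ne_zero V hV _) (hdp j)]
  simp_rw [this]
  rw [Finset.sum_add_distrib, Equiv.sum_comp τ (fun j => Real.log (colNorm V j))]
  ring

/-- the global IMA contrast is invariant under reparametrisation of
the sources by a permutation `P` composed with an element-wise smooth
diffeomorphism `h`: with `f̃ = f ∘ h⁻¹ ∘ P⁻¹` and `p̃` the pushforward density of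
`p` under `s ↦ P h(s)`, one has `C_IMA(f̃, p̃) = C_IMA(f, p)`. -/
theorem globalIMA_invariant_under_permutation_and_elementwise_reparametrisation
    {n : ℕ}
    (f finv : (Fin n → ℝ) → (Fin n → ℝ))
    (hf : ContDiff ℝ (⊤ : ℕ∞) f) (hfinv : ContDiff ℝ (⊤ : ℕ∞) finv)
    (hfli : Function.LeftInverse finv f) (hfri : Function.RightInverse finv f)
    (σ : Equiv.Perm (Fin n))
    (h hinv : Fin n → ℝ → ℝ)
    (hhsm : ∀ i, ContDiff ℝ (⊤ : ℕ∞) (h i)) (hhinvsm : ∀ i, ContDiff ℝ (⊤ : ℕ∞) (hinv i))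
    (hhli : ∀ i, Function.LeftInverse (hinv i) (h i))
    (hhri : ∀ i, Function.RightInverse (hinv i) (h i))
    (hhderiv : ∀ i x, deriv (h i) x ≠ 0)
    (p ptilde : (Fin n → ℝ) → ℝ)
    (hp0 : ∀ s, 0 ≤ p s) (hp1 : (∫ s, p s) = 1)
    -- `p̃` is the pushforward density of `p` under `T : s ↦ P h(s)`,
    -- characterised by the change-of-variables relation `p̃(T s)·|det J_T(s)| = p(s)`:
    (hpush : ∀ s : Fin n → ℝ,
      ptilde ((σ.permMatrix ℝ).mulVec fun i => h i (s i)) *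
        |(jacobian (fun s => (σ.permMatrix ℝ).mulVec fun i => h i (s i)) s).det|
        = p s) :
    CIMA (fun y => f fun i => hinv i (((σ⁻¹).permMatrix ℝ).mulVec y i)) ptilde
      = CIMA f p := by
  have hperm : ∀ (τ : Equiv.Perm (Fin n)) (v : Fin n → ℝ) (i : Fin n),
      ((τ.permMatrix ℝ).mulVec v) i = v (τ i) := by
    intro τ v i
    rw [Matrix.permMatrix_mulVec]
    rfl
  obtain ⟨T, hT⟩ : ∃ T : (Fin n → ℝ) → (Fin n → ℝ),
      T = fun s => (σ.permMatrix ℝ).mulVec fun i => h i (s i) := ⟨_, rfl⟩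
  obtain ⟨g, hg⟩ : ∃ g : (Fin n → ℝ) → (Fin n → ℝ),
      g = fun y => f fun i => hinv i (((σ⁻¹).permMatrix ℝ).mulVec y i) := ⟨_, rfl⟩
  have hpush' : ∀ s, ptilde (T s) * |(jacobian T s).det| = p s := by
    subst hT; exact hpush
  rw [← hg]
  have hT' : T = fun s i => h (σ i) (s (σ i)) := by
    rw [hT]; funext s i; rw [hperm]
  have hg' : g = fun y => f fun i => hinv i (y (σ⁻¹ i)) := by
    rw [hg]; funext y; simp_rw [hperm]
  have hTd : ∀ s, HasFDerivAt T (ContinuousLinearMap.pi fun i =>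
      deriv (h (σ i)) (s (σ i)) • ContinuousLinearMap.proj (R := ℝ) (φ := fun _ : Fin n => ℝ) (σ i)) s := by
    intro s
    rw [hT', hasFDerivAt_pi]
    intro i
    have h1 : HasDerivAt (h (σ i)) (deriv (h (σ i)) (s (σ i))) (s (σ i)) :=
      ((hhsm (σ i)).differentiable (by simp) _).hasDerivAt
    exact h1.comp_hasFDerivAt s (hasFDerivAt_apply (σ i) s)
  have hJT : ∀ s i j, jacobian T s i j = if σ i = j then deriv (h j) (s j) else 0 := by
    intro s i j
    simp only [jacobian, (hTd s).fderiv, Matrix.of_apply]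
    by_cases hij : σ i = j
    · subst hij; simp
    · simp [hij]
  have hfd : Differentiable ℝ f := hf.differentiable (by simp)
  have hfid : Differentiable ℝ finv := hfinv.differentiable (by simp)
  have hgd : Differentiable ℝ g := by
    rw [hg']
    refine hfd.comp ?_
    rw [differentiable_pi]
    intro i
    exact ((hhinvsm i).differentiable (by simp)).comp (differentiable_apply (σ⁻¹ i))
  have hgT : g ∘ T = f := by
    funext s
    simp only [hg', hT', Function.comp]
    congr 1
    funext i
    simp [hhli i (s i)]
  have hinj : Function.Injective T := by
    intro a b hab
    have h1 : f a = f b := by rw [← hgT]; simp [hab]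
    exact hfli.injective h1
  have hsurj : Function.Surjective T := by
    intro y
    refine ⟨fun i => hinv i (y (σ⁻¹ i)), ?_⟩
    rw [hT']
    funext i
    simp [hhri (σ i) (y i)]
  have hdetf : ∀ s, (jacobian f s).det ≠ 0 := by
    intro s h0
    have h1 := jacobian_comp finv f s (hfid _) (hfd _)
    have h2 : finv ∘ f = id := funext hfli
    have h3 : jacobian (id : (Fin n → ℝ) → (Fin n → ℝ)) s = 1 := by
      rw [jacobian_eq_toMatrix, fderiv_id]
      exact LinearMap.toMatrix'_id
    rw [h2, h3] at h1
    have h4 := congrArg Matrix.det h1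
    rw [Matrix.det_mul, h0] at h4
    simp at h4
  have hloc : ∀ s, cIMA (jacobian f s) = cIMA (jacobian g (T s)) := by
    intro s
    refine cIMA_reparam _ _ (fun j => deriv (h j) (s j)) σ⁻¹ ?_ (hdetf s)
    intro i j
    have h1 := jacobian_comp g T s (hgd _) (hTd s).differentiableAt
    rw [hgT] at h1
    rw [h1, Matrix.mul_apply]
    simp_rw [hJT]
    rw [Finset.sum_eq_single (σ⁻¹ j)]
    · simp
    · intro b _ hb
      have : σ b ≠ j := by rintro rfl; simp at hb
      simp [this]
    · simp
  unfold CIMA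
  have key := integral_image_eq_integral_abs_det_fderiv_smul (volume : Measure (Fin n → ℝ))
    MeasurableSet.univ (fun x _ => (hTd x).hasFDerivWithinAt) hinj.injOn
    (fun y => cIMA (jacobian g y) * ptilde y)
  rw [Set.image_univ, hsurj.range_eq, setIntegral_univ, setIntegral_univ] at key
  rw [key]
  refine integral_congr_ae (Filter.Eventually.of_forall fun s => ?_)
  simp only [smul_eq_mul]
  rw [← (hTd s).fderiv, ← det_jacobian, hloc s, ← hpush' s]
  ring
end

section
/- Let W ∈ ℝ^{n×n} be an invertible lower triangular matrix. Then the local IMA contrast c(W) := ∑_{i=1}^n log ‖w_i‖ − log |det W| (with w_i the columns of W) satisfies c(W) ≥ 0, and c(W) = 0 if and only if W is diagonal; otherwise c(W) > 0. -/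
open Matrix

/-- for an invertible lower triangular matrix, the local IMA
contrast is nonnegative, vanishes iff the matrix is diagonal, and is strictly
positive otherwise. -/
theorem localIMA_lowerTriangular
    {n : ℕ} (W : Matrix (Fin n) (Fin n) ℝ) (hW : W.det ≠ 0)
    (htri : ∀ i j : Fin n, i < j → W i j = 0) :
    0 ≤ cIMA W ∧
      (cIMA W = 0 ↔ ∀ i j : Fin n, i ≠ j → W i j = 0) ∧
      ((¬ ∀ i j : Fin n, i ≠ j → W i j = 0) → 0 < cIMA W) := by
  have hdet : W.det = ∏ i, W i i :=
    Matrix.det_of_lowerTriangular W (fun i j h => htri i j (by simpa using h))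
  have hne : ∀ i, W i i ≠ 0 := by
    intro i
    rw [hdet] at hW
    exact Finset.prod_ne_zero_iff.mp hW i (Finset.mem_univ i)
  have hpos : ∀ i, 0 < |W i i| := fun i => abs_pos.mpr (hne i)
  have hc : cIMA W = ∑ i, (Real.log (colNorm W i) - Real.log |W i i|) := by
    unfold cIMA
    rw [hdet, Finset.abs_prod, Real.log_prod (fun i _ => (hpos i).ne'), Finset.sum_sub_distrib]
  have hle : ∀ i, |W i i| ≤ colNorm W i := by
    intro i
    unfold colNorm
    rw [← Real.sqrt_sq_eq_abs]
    exact Real.sqrt_le_sqrt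
      (Finset.single_le_sum (f := fun j => (W j i) ^ 2) (fun j _ => sq_nonneg _)
        (Finset.mem_univ i))
  have hlt : ∀ i j, j ≠ i → W j i ≠ 0 → |W i i| < colNorm W i := by
    intro i j hj hji
    unfold colNorm
    rw [← Real.sqrt_sq_eq_abs]
    exact Real.sqrt_lt_sqrt (sq_nonneg _)
      (Finset.single_lt_sum (f := fun j => (W j i) ^ 2) hj (Finset.mem_univ i)
        (Finset.mem_univ j) (by positivity) (fun k _ _ => sq_nonneg _))
  have hterm : ∀ i, 0 ≤ Real.log (colNorm W i) - Real.log |W i i| := fun i =>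
    sub_nonneg.mpr (Real.log_le_log (hpos i) (hle i))
  have hstrict : (¬ ∀ i j : Fin n, i ≠ j → W i j = 0) → 0 < cIMA W := by
    intro h
    push Not at h
    obtain ⟨j, i, hji, h0⟩ := h
    rw [hc]
    exact Finset.sum_pos' (fun i _ => hterm i)
      ⟨i, Finset.mem_univ i, sub_pos.mpr (Real.log_lt_log (hpos i) (hlt i j hji h0))⟩
  refine ⟨?_, ⟨?_, ?_⟩, hstrict⟩
  · rw [hc]
    exact Finset.sum_nonneg (fun i _ => hterm i)
  · intro h
    by_contra hn
    exact (hstrict hn).ne' h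
  · intro h
    rw [hc]
    refine Finset.sum_eq_zero (fun i _ => ?_)
    have : colNorm W i = |W i i| := by
      unfold colNorm
      rw [← Real.sqrt_sq_eq_abs, Finset.sum_eq_single i]
      · intro j _ hj
        rw [h j i hj]
        simp
      · simp
    rw [this, sub_self]
end

section
/- Let f: ℝⁿ → ℝⁿ be continuously differentiable such that at every point s the Jacobian J_f(s) is invertible and lower triangular, and let p be a probability density on ℝⁿ with c_IMA(f,·) p-integrable. Then C_IMA(f,p) = 0 if and only if J_f(s) is diagonal for p-almost every s; otherwise C_IMA(f,p) > 0. -/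
open Matrix MeasureTheory

theorem aux_cIMA_eq {n : ℕ} (W : Matrix (Fin n) (Fin n) ℝ) (hdet : W.det ≠ 0)
    (htri : ∀ i j : Fin n, i < j → W i j = 0) :
    (∀ i, W i i ≠ 0) ∧ cIMA W = ∑ i, (Real.log (colNorm W i) - Real.log |W i i|) := by
  have hd : W.det = ∏ i, W i i := by
    apply Matrix.det_of_lowerTriangular
    intro i j hij
    exact htri i j (by simpa using hij)
  have hne : ∀ i, W i i ≠ 0 := by
    intro i
    rw [hd] at hdet
    exact Finset.prod_ne_zero_iff.mp hdet i (Finset.mem_univ i)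
  refine ⟨hne, ?_⟩
  rw [cIMA, hd, Finset.abs_prod, Real.log_prod (fun i _ => abs_ne_zero.mpr (hne i)),
    Finset.sum_sub_distrib]

theorem aux_le {n : ℕ} (W : Matrix (Fin n) (Fin n) ℝ) (i : Fin n) :
    |W i i| ≤ colNorm W i := by
  rw [colNorm, ← Real.sqrt_sq_eq_abs]
  exact Real.sqrt_le_sqrt
    (Finset.single_le_sum (f := fun j => W j i ^ 2) (fun j _ => sq_nonneg _) (Finset.mem_univ i))

theorem aux_eq_iff {n : ℕ} (W : Matrix (Fin n) (Fin n) ℝ) (i : Fin n) :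
    colNorm W i = |W i i| ↔ ∀ j, j ≠ i → W j i = 0 := by
  rw [colNorm, ← Real.sqrt_sq_eq_abs, Real.sqrt_inj
    (Finset.sum_nonneg (fun j _ => sq_nonneg _)) (sq_nonneg _),
    ← Finset.add_sum_erase _ _ (Finset.mem_univ i), add_eq_left,
    Finset.sum_eq_zero_iff_of_nonneg (fun j _ => sq_nonneg _)]
  simp

theorem aux_term_nonneg {n : ℕ} (W : Matrix (Fin n) (Fin n) ℝ) (i : Fin n) (h : W i i ≠ 0) :
    0 ≤ Real.log (colNorm W i) - Real.log |W i i| :=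
  sub_nonneg.mpr (Real.log_le_log (abs_pos.mpr h) (aux_le W i))

theorem aux_cIMA_nonneg {n : ℕ} (W : Matrix (Fin n) (Fin n) ℝ) (hdet : W.det ≠ 0)
    (htri : ∀ i j : Fin n, i < j → W i j = 0) : 0 ≤ cIMA W := by
  obtain ⟨hne, h⟩ := aux_cIMA_eq W hdet htri
  rw [h]
  exact Finset.sum_nonneg (fun i _ => aux_term_nonneg W i (hne i))

theorem aux_cIMA_zero {n : ℕ} (W : Matrix (Fin n) (Fin n) ℝ) (hdet : W.det ≠ 0)
    (htri : ∀ i j : Fin n, i < j → W i j = 0) :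
    cIMA W = 0 ↔ ∀ i j : Fin n, i ≠ j → W i j = 0 := by
  obtain ⟨hne, h⟩ := aux_cIMA_eq W hdet htri
  rw [h, Finset.sum_eq_zero_iff_of_nonneg (fun i _ => aux_term_nonneg W i (hne i))]
  have key : ∀ i, Real.log (colNorm W i) - Real.log |W i i| = 0 ↔ ∀ j, j ≠ i → W j i = 0 := by
    intro i
    have hpos := abs_pos.mpr (hne i)
    rw [← aux_eq_iff, sub_eq_zero]
    exact Real.log_injOn_pos.eq_iff (hpos.trans_le (aux_le W i)) hpos
  simp only [key, Finset.mem_univ, true_imp_iff]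
  exact ⟨fun H i j => H j i, fun H i j => H j i⟩

/-- for a map with everywhere invertible lower triangular Jacobian,
the global IMA contrast vanishes iff the Jacobian is diagonal `p`-almost
everywhere, and is strictly positive otherwise. -/
theorem globalIMA_triangularJacobian
    {n : ℕ} (f : (Fin n → ℝ) → (Fin n → ℝ))
    (hf : ContDiff ℝ 1 f)
    (hJinv : ∀ s, (jacobian f s).det ≠ 0)
    (hJtri : ∀ s, ∀ i j : Fin n, i < j → jacobian f s i j = 0)
    (p : (Fin n → ℝ) → ℝ) (hp0 : ∀ s, 0 ≤ p s) (hp1 : (∫ s, p s) = 1)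
    (hint : Integrable fun s => cIMA (jacobian f s) * p s) :
    (CIMA f p = 0 ↔
      ∀ᵐ s ∂(volume.withDensity fun s => ENNReal.ofReal (p s)),
        ∀ i j : Fin n, i ≠ j → jacobian f s i j = 0) ∧
    ((¬ ∀ᵐ s ∂(volume.withDensity fun s => ENNReal.ofReal (p s)),
        ∀ i j : Fin n, i ≠ j → jacobian f s i j = 0) → 0 < CIMA f p) := by
  have hnn : 0 ≤ fun s => cIMA (jacobian f s) * p s := fun s =>
    mul_nonneg (aux_cIMA_nonneg _ (hJinv s) (hJtri s)) (hp0 s)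
  have hpi : Integrable p := by
    by_contra h
    rw [integral_undef h] at hp1
    exact zero_ne_one hp1
  have main : CIMA f p = 0 ↔
      ∀ᵐ s ∂(volume.withDensity fun s => ENNReal.ofReal (p s)),
        ∀ i j : Fin n, i ≠ j → jacobian f s i j = 0 := by
    rw [CIMA, integral_eq_zero_iff_of_nonneg hnn hint,
      ae_withDensity_iff' hpi.aestronglyMeasurable.aemeasurable.ennreal_ofReal]
    apply Filter.eventually_congr
    refine Filter.Eventually.of_forall fun s => ?_
    have h1 := aux_cIMA_zero _ (hJinv s) (hJtri s)
    have h2 : ENNReal.ofReal (p s) ≠ 0 ↔ p s ≠ 0 := by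
      rw [Ne, ENNReal.ofReal_eq_zero]
      exact not_congr ⟨fun h => le_antisymm h (hp0 s), fun h => h.le⟩
    rw [h2, ← h1, Pi.zero_apply, mul_eq_zero]
    tauto
  refine ⟨main, fun h => ?_⟩
  exact lt_of_le_of_ne (integral_nonneg hnn) (fun h0 => h (main.mp h0.symm))
end

section
/- Let f: ℝⁿ → ℝⁿ be a conformal map, i.e., a smooth map whose Jacobian satisfies J_f(s) = λ(s) O(s) for all s, where λ: ℝⁿ → ℝ is a nowhere-vanishing scalar field and O(s) is an orthogonal matrix. Then the local IMA contrast vanishes identically, c_IMA(f,s) = 0 for all s, and hence C_IMA(f,p) = 0 for every probability density p on ℝⁿ. -/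
open Matrix MeasureTheory

/-- for a conformal map `f` (Jacobian `J_f(s) = λ(s)·O(s)` with
`λ` nowhere vanishing and `O(s)` orthogonal), the local IMA contrast vanishes
identically, and hence the global IMA contrast vanishes for every probability
density `p`. -/
theorem conformal_map_has_zero_IMA_contrast
    {n : ℕ} (f : (Fin n → ℝ) → (Fin n → ℝ)) (hf : ContDiff ℝ (⊤ : ℕ∞) f)
    (lam : (Fin n → ℝ) → ℝ) (hlam : ∀ s, lam s ≠ 0)
    (O : (Fin n → ℝ) → Matrix (Fin n) (Fin n) ℝ)
    (hO : ∀ s, (O s)ᵀ * O s = 1)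
    (hconf : ∀ s, jacobian f s = lam s • O s) :
    (∀ s, cIMA (jacobian f s) = 0) ∧
    (∀ p : (Fin n → ℝ) → ℝ, (∀ s, 0 ≤ p s) → (∫ s, p s) = 1 → CIMA f p = 0) := by
  have key : ∀ s, cIMA (jacobian f s) = 0 := by
    intro s
    have hcol : ∀ i, colNorm (jacobian f s) i = |lam s| := by
      intro i
      have h1 : ∑ j, (O s j i) ^ 2 = 1 := by
        have h := congrFun (congrFun (hO s) i) i
        simpa [Matrix.mul_apply, pow_two] using h
      unfold colNorm
      rw [hconf s]
      simp only [Matrix.smul_apply, smul_eq_mul, mul_pow]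
      rw [← Finset.mul_sum, h1, mul_one, Real.sqrt_sq_eq_abs]
    have hdet : |(O s).det| = 1 := by
      have h := congrArg Matrix.det (hO s)
      rw [Matrix.det_mul, Matrix.det_transpose, Matrix.det_one] at h
      rw [← Real.sqrt_sq_eq_abs, pow_two, h, Real.sqrt_one]
    unfold cIMA
    simp only [hcol]
    rw [hconf s, Matrix.det_smul, abs_mul, hdet, mul_one, abs_pow, Real.log_pow]
    simp
  refine ⟨key, fun p _ _ => ?_⟩
  unfold CIMA
  simp [key]
end

section
/- Let R ∈ ℝ^{n×n} be an orthogonal matrix and fix indices i ≠ j with R_{1i} · R_{1j} ≠ 0. Let d_1, …, d_n: ℝ → ℝ be strictly positive functions such that d_1 is strictly monotonic on some open neighborhood of a point z₁⁰ ∈ ℝ. Then it is NOT the case that ∑_{k=1}^n d_k(z_k) R_{ki} R_{kj} = 0 for all z = (z_1, …, z_n) ∈ ℝⁿ; i.e., there exists z ∈ ℝⁿ with ∑_{k=1}^n d_k(z_k) R_{ki} R_{kj} ≠ 0. -/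
open Matrix

/-- let `R` be orthogonal with `R_{1i}·R_{1j} ≠ 0` for some
`i ≠ j`, and `d_1, …, d_n` strictly positive weight functions with `d_1`
strictly monotonic on an open neighborhood of some point `z₁⁰`. Then
`∑_k d_k(z_k) R_{ki} R_{kj}` cannot vanish for all `z`. -/
theorem weighted_offdiagonal_sum_not_identically_zero
    {n : ℕ} [NeZero n]
    (R : Matrix (Fin n) (Fin n) ℝ) (hR : Rᵀ * R = 1)
    (i j : Fin n) (hij : i ≠ j)
    (hRij : R 0 i * R 0 j ≠ 0)
    (d : Fin n → ℝ → ℝ) (hd : ∀ k x, 0 < d k x)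
    (z₁0 : ℝ) (U : Set ℝ) (hUopen : IsOpen U) (hz : z₁0 ∈ U)
    (hmono : StrictMonoOn (d 0) U ∨ StrictAntiOn (d 0) U) :
    ∃ z : Fin n → ℝ, (∑ k, d k (z k) * R k i * R k j) ≠ 0 := by
  obtain ⟨ε, hε, hball⟩ := Metric.isOpen_iff.1 hUopen z₁0 hz
  have hy : z₁0 + ε / 2 ∈ U := by
    apply hball
    rw [Metric.mem_ball, Real.dist_eq, add_sub_cancel_left, abs_of_pos (by linarith)]
    linarith
  have hlt : z₁0 < z₁0 + ε / 2 := by linarith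
  have hne : d 0 z₁0 ≠ d 0 (z₁0 + ε / 2) := by
    rcases hmono with h | h
    · exact (h hz hy hlt).ne
    · exact (h hz hy hlt).ne'
  by_contra! hall
  have h1 := hall (fun _ => z₁0)
  have h2 := hall (Function.update (fun _ => z₁0) 0 (z₁0 + ε / 2))
  rw [← Finset.add_sum_erase _ _ (Finset.mem_univ (0 : Fin n))] at h1 h2
  have h3 : ∑ k ∈ Finset.univ.erase (0 : Fin n),
      d k (Function.update (fun _ => z₁0) 0 (z₁0 + ε / 2) k) * R k i * R k j
      = ∑ k ∈ Finset.univ.erase (0 : Fin n), d k z₁0 * R k i * R k j := by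
    apply Finset.sum_congr rfl
    intro k hk
    rw [Function.update_of_ne (Finset.ne_of_mem_erase hk)]
  rw [h3, Function.update_self] at h2
  have h4 : (d 0 z₁0 - d 0 (z₁0 + ε / 2)) * (R 0 i * R 0 j) = 0 := by
    linear_combination h1 - h2
  rcases mul_eq_zero.1 h4 with h | h
  · exact hne (sub_eq_zero.1 h)
  · exact hRij h
end

section
/- Let f: ℝⁿ → ℝⁿ be a smooth conformal map with Jacobian J_f(s) = λ(s) O(s), where λ is a strictly positive scalar field and O(s) is orthogonal for each s. Let σ(z) = (σ_1(z_1), …, σ_n(z_n)) be an element-wise smooth diffeomorphism of ℝⁿ with strictly positive derivatives, such that the derivative of σ_1⁻¹ is strictly monotonic on a neighborhood of some point z₁⁰ (equivalently, σ_1 is not affine). Let R ∈ ℝ^{n×n} be an orthogonal matrix whose first row has at least two nonvanishing entries (equivalently, Rᵀ does not map the first canonical basis vector e_1 to ± a canonical basis vector). Let p be a smooth strictly positive probability density on ℝⁿ. Then C_IMA(f ∘ σ⁻¹ ∘ R, p) > 0. -/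
open Matrix MeasureTheory

theorem aux_cIMA {n : ℕ} (l : ℝ) (hl : 0 < l) (O R : Matrix (Fin n) (Fin n) ℝ)
    (hO : Oᵀ * O = 1) (hR : Rᵀ * R = 1) (d : Fin n → ℝ) (hd : ∀ k, 0 < d k)
    (hs : ∀ i, 0 < ∑ k, (R k i) ^ 2 * (d k) ^ 2) :
    cIMA ((l • O) * diagonal d * R) =
      (1 / 2) * ((∑ i, Real.log (∑ k, (R k i) ^ 2 * (d k) ^ 2)) - ∑ k, Real.log ((d k) ^ 2)) := by
  have habs : ∀ M : Matrix (Fin n) (Fin n) ℝ, Mᵀ * M = 1 → |M.det| = 1 := by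
    intro M hM
    have h := congrArg Matrix.det hM
    rw [det_mul, det_transpose, det_one] at h
    have h2 : |M.det| * |M.det| = 1 := by rw [abs_mul_abs_self]; exact h
    nlinarith [abs_nonneg M.det]
  have hcol : ∀ i, colNorm ((l • O) * diagonal d * R) i
      = Real.sqrt (l ^ 2 * ∑ k, (R k i) ^ 2 * (d k) ^ 2) := by
    intro i
    unfold colNorm
    congr 1
    have h1 : ∑ j, (((l • O) * diagonal d * R) j i) ^ 2
        = (((l • O) * diagonal d * R)ᵀ * ((l • O) * diagonal d * R)) i i := by
      rw [Matrix.mul_apply (M := ((l • O) * diagonal d * R)ᵀ)]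
      simp only [transpose_apply, sq]
    have h2 : ((l • O) * diagonal d * R)ᵀ * ((l • O) * diagonal d * R)
        = (l ^ 2) • (Rᵀ * (diagonal d * (diagonal d * R))) := by
      simp only [transpose_mul, transpose_smul, diagonal_transpose, Matrix.smul_mul,
        Matrix.mul_smul, smul_smul, sq]
      congr 1
      calc _ = Rᵀ * (diagonal d * ((Oᵀ * O) * (diagonal d * R))) := by
            simp only [Matrix.mul_assoc]
        _ = _ := by rw [hO, Matrix.one_mul]
    rw [h1, h2, Matrix.smul_apply, Matrix.mul_apply, smul_eq_mul]
    congr 1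
    refine Finset.sum_congr rfl fun k _ => ?_
    rw [diagonal_mul, diagonal_mul, transpose_apply]; ring
  have hdet : |((l • O) * diagonal d * R).det| = l ^ n * ∏ k, d k := by
    rw [det_mul, det_mul, det_smul, det_diagonal, abs_mul, abs_mul, abs_mul, habs O hO, habs R hR,
      abs_of_pos (Finset.prod_pos fun k _ => hd k), abs_of_pos (by positivity)]
    simp
  have hprod : 0 < ∏ k, d k := Finset.prod_pos fun k _ => hd k
  unfold cIMA
  rw [hdet, Real.log_mul (by positivity) hprod.ne', Real.log_pow,
    Real.log_prod (fun k _ => (hd k).ne')]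
  have h3 : ∀ i, Real.log (colNorm ((l • O) * diagonal d * R) i)
      = Real.log l + (1 / 2) * Real.log (∑ k, (R k i) ^ 2 * (d k) ^ 2) := by
    intro i
    have := (hs i).ne'
    rw [hcol, Real.log_sqrt (by have := hs i; positivity), Real.log_mul (by positivity) this,
      Real.log_pow]
    push_cast; ring
  simp only [h3, Finset.sum_add_distrib, ← Finset.mul_sum, Real.log_pow]
  simp
  ring

theorem aux_jac {n : ℕ} (f : (Fin n → ℝ) → (Fin n → ℝ)) (hf : Differentiable ℝ f)
    (τ : Fin n → ℝ → ℝ) (hτ : ∀ i, Differentiable ℝ (τ i)) (R : Matrix (Fin n) (Fin n) ℝ)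
    (z : Fin n → ℝ) :
    jacobian (fun z => f fun k => τ k (R.mulVec z k)) z =
      jacobian f (fun k => τ k (R.mulVec z k)) *
        diagonal (fun k => deriv (τ k) (R.mulVec z k)) * R := by
  have hlin : HasFDerivAt (fun z : Fin n → ℝ => R.mulVec z)
      (LinearMap.toContinuousLinearMap (Matrix.mulVecLin R)) z :=
    (LinearMap.toContinuousLinearMap (Matrix.mulVecLin R)).hasFDerivAt
  have hk : ∀ k, HasFDerivAt (fun z : Fin n → ℝ => τ k (R.mulVec z k))
      ((deriv (τ k) (R.mulVec z k)) • ((ContinuousLinearMap.proj k).comp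
        (LinearMap.toContinuousLinearMap (Matrix.mulVecLin R)))) z := by
    intro k
    exact (hτ k _).hasDerivAt.comp_hasFDerivAt z ((hasFDerivAt_pi'.1 hlin) k)
  have hh := hasFDerivAt_pi.2 hk
  have hg := (hf (fun k => τ k (R.mulVec z k))).hasFDerivAt.comp z hh
  ext a b
  have e : fderiv ℝ (fun z => f fun k => τ k (R.mulVec z k)) z = _ := hg.fderiv
  simp only [jacobian, of_apply]
  rw [e, Matrix.mul_assoc, Matrix.mul_apply]
  simp only [of_apply, diagonal_mul, ContinuousLinearMap.comp_apply]
  set v := (ContinuousLinearMap.pi fun k => ((deriv (τ k) (R.mulVec z k)) •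
    ((ContinuousLinearMap.proj k).comp
        (LinearMap.toContinuousLinearMap (Matrix.mulVecLin R)) : (Fin n → ℝ) →L[ℝ] ℝ)))
      (Pi.single b 1) with hv
  have hvk : ∀ k, v k = deriv (τ k) (R.mulVec z k) * R k b := by
    intro k; simp [hv]
  have h5 := (fderiv ℝ f (fun k => τ k (R.mulVec z k))).toLinearMap.pi_apply_eq_sum_univ v
  have h6 := congrFun h5 a
  simp only [ContinuousLinearMap.coe_coe, Finset.sum_apply, Pi.smul_apply, smul_eq_mul] at h6
  rw [h6]
  refine Finset.sum_congr rfl fun k _ => ?_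
  rw [hvk, mul_comm]
  have e7 : (fun x => if k = x then (1 : ℝ) else 0) = Pi.single k 1 := by
    ext x
    simp [Pi.single_apply, eq_comm]
  first
    | rw [e7]
    | rfl

theorem aux_jensen {n : ℕ} (R : Matrix (Fin n) (Fin n) ℝ) (hR : Rᵀ * R = 1)
    (d : Fin n → ℝ) (hd : ∀ k, 0 < d k) :
    (∀ i, 0 < ∑ k, (R k i) ^ 2 * (d k) ^ 2) ∧
    0 ≤ (∑ i, Real.log (∑ k, (R k i) ^ 2 * (d k) ^ 2)) - ∑ k, Real.log ((d k) ^ 2) ∧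
    ((∑ i, Real.log (∑ k, (R k i) ^ 2 * (d k) ^ 2)) - ∑ k, Real.log ((d k) ^ 2) = 0 →
      ∀ i k l, R k i ≠ 0 → R l i ≠ 0 → d k = d l) := by
  have hcol : ∀ i, ∑ k, (R k i) ^ 2 = 1 := by
    intro i
    have := congrFun (congrFun hR i) i
    rw [Matrix.mul_apply] at this
    simpa [sq] using this
  have hrow : ∀ k, ∑ i, (R k i) ^ 2 = 1 := by
    intro k
    have hRR : R * Rᵀ = 1 := mul_eq_one_comm.1 hR
    have := congrFun (congrFun hRR k) k
    rw [Matrix.mul_apply] at this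
    simpa [sq] using this
  have hsc := strictConcaveOn_log_Ioi
  have hm : ∀ k ∈ Finset.univ, (d k) ^ 2 ∈ Set.Ioi (0 : ℝ) := fun k _ => by
    have := hd k
    simp only [Set.mem_Ioi]; positivity
  have hj : ∀ i, ∑ k, (R k i) ^ 2 * Real.log ((d k) ^ 2)
      ≤ Real.log (∑ k, (R k i) ^ 2 * (d k) ^ 2) := by
    intro i
    simpa using hsc.concaveOn.le_map_sum (t := Finset.univ) (w := fun k => (R k i) ^ 2)
      (p := fun k => (d k) ^ 2) (fun k _ => sq_nonneg _) (hcol i) hm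
  have hsum : ∑ i, ∑ k, (R k i) ^ 2 * Real.log ((d k) ^ 2) = ∑ k, Real.log ((d k) ^ 2) := by
    rw [Finset.sum_comm]
    refine Finset.sum_congr rfl fun k _ => ?_
    rw [← Finset.sum_mul, hrow, one_mul]
  refine ⟨fun i => ?_, ?_, ?_⟩
  · refine lt_of_le_of_ne (Finset.sum_nonneg fun k _ => by positivity) fun h => ?_
    have h0 := (Finset.sum_eq_zero_iff_of_nonneg (fun k _ => by positivity)).1 h.symm
    have : ∑ k, (R k i) ^ 2 = 0 := Finset.sum_eq_zero fun k hk => by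
      have := h0 k hk
      have h2 := (hd k).ne'
      simpa [h2] using this
    rw [hcol] at this
    exact one_ne_zero this
  · rw [← hsum, sub_nonneg]
    exact Finset.sum_le_sum fun i _ => hj i
  · intro h i
    rw [← hsum, sub_eq_zero] at h
    have h1 := (Finset.sum_eq_sum_iff_of_le (fun i _ => hj i)).1 h.symm i (Finset.mem_univ _)
    have h2 := (hsc.map_sum_eq_iff' (t := Finset.univ) (w := fun k => (R k i) ^ 2)
      (p := fun k => (d k) ^ 2) (fun k _ => sq_nonneg _) (hcol i) hm).1 (by simpa using h1.symm)
    intro k l hk hl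
    have e1 := h2 k (Finset.mem_univ k) (pow_ne_zero 2 hk)
    have e2 := h2 l (Finset.mem_univ l) (pow_ne_zero 2 hl)
    have e3 : d k ^ 2 = d l ^ 2 := e1.trans e2.symm
    exact (pow_left_inj₀ (hd k).le (hd l).le two_ne_zero).1 e3

/-- a conformal mixing composed with a "rotated-Gaussian"
measure-preserving automorphism has positive IMA contrast, reduced form:
for a smooth conformal map `f`, an element-wise smooth diffeomorphism `σ` with
strictly positive derivatives whose first component is not affine (the
derivative of `σ₁⁻¹` is strictly monotonic near some `z₁⁰`), and an orthogonal
`R` whose first row has two nonvanishing entries, the map `f ∘ σ⁻¹ ∘ R` has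
strictly positive global IMA contrast w.r.t. any smooth positive density `p`. -/
theorem conformal_comp_MPA_has_positive_CIMA
    {n : ℕ} [NeZero n]
    (f : (Fin n → ℝ) → (Fin n → ℝ)) (hf : ContDiff ℝ (⊤ : ℕ∞) f)
    (lam : (Fin n → ℝ) → ℝ) (hlam : ∀ s, 0 < lam s)
    (O : (Fin n → ℝ) → Matrix (Fin n) (Fin n) ℝ) (hO : ∀ s, (O s)ᵀ * O s = 1)
    (hconf : ∀ s, jacobian f s = lam s • O s)
    (σ σinv : Fin n → ℝ → ℝ)
    (hσsm : ∀ i, ContDiff ℝ (⊤ : ℕ∞) (σ i)) (hσinvsm : ∀ i, ContDiff ℝ (⊤ : ℕ∞) (σinv i))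
    (hli : ∀ i, Function.LeftInverse (σinv i) (σ i))
    (hri : ∀ i, Function.RightInverse (σinv i) (σ i))
    (hpos : ∀ i x, 0 < deriv (σ i) x)
    (z₁0 : ℝ) (U : Set ℝ) (hUopen : IsOpen U) (hz : z₁0 ∈ U)
    (hmono : StrictMonoOn (deriv (σinv 0)) U ∨ StrictAntiOn (deriv (σinv 0)) U)
    (R : Matrix (Fin n) (Fin n) ℝ) (hR : Rᵀ * R = 1)
    (i j : Fin n) (hij : i ≠ j) (hRi : R 0 i ≠ 0) (hRj : R 0 j ≠ 0)
    (p : (Fin n → ℝ) → ℝ) (hpsm : ContDiff ℝ (⊤ : ℕ∞) p) (hppos : ∀ z, 0 < p z)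
    (hp1 : (∫ z, p z) = 1)
    (g : (Fin n → ℝ) → (Fin n → ℝ))
    (hg : g = fun z => f fun k => σinv k (R.mulVec z k))
    (hint : Integrable fun z => cIMA (jacobian g z) * p z) :
    0 < CIMA g p := by
  have hdinv : ∀ k y, 0 < deriv (σinv k) y := by
    intro k y
    have h1 := ((hσsm k).differentiable (by simp) (σinv k y)).hasDerivAt
    have h2 := ((hσinvsm k).differentiable (by simp) y).hasDerivAt
    have h3 := h1.comp y h2
    have h4 : (σ k ∘ σinv k) = id := funext (hri k)
    rw [h4] at h3
    have h5 := h3.unique (hasDerivAt_id y)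
    have h6 := hpos k (σinv k y)
    by_contra hc
    nlinarith [not_lt.1 hc]
  have hcont : ∀ k, Continuous fun z : Fin n → ℝ => deriv (σinv k) (R.mulVec z k) := by
    intro k
    have h1 : Continuous (deriv (σinv k)) := (hσinvsm k).continuous_deriv (by simp)
    have h2 : Continuous fun z : Fin n → ℝ => R.mulVec z k :=
      (continuous_apply k).comp (Continuous.matrix_mulVec continuous_const continuous_id)
    exact h1.comp h2
  have hJ : ∀ z, cIMA (jacobian g z) =
      (1 / 2) * ((∑ i, Real.log (∑ k, (R k i) ^ 2 * (deriv (σinv k) (R.mulVec z k)) ^ 2))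
        - ∑ k, Real.log ((deriv (σinv k) (R.mulVec z k)) ^ 2)) := by
    intro z
    have hs := aux_jensen R hR (fun k => deriv (σinv k) (R.mulVec z k)) fun k => hdinv k _
    rw [hg, aux_jac f (hf.differentiable (by simp)) σinv
      (fun i => (hσinvsm i).differentiable (by simp)) R z, hconf]
    exact aux_cIMA _ (hlam _) _ R (hO _) hR _ (fun k => hdinv k _) hs.1
  have hcc : Continuous fun z => cIMA (jacobian g z) := by
    simp only [hJ]
    refine continuous_const.mul (Continuous.sub ?_ ?_)
    · refine continuous_finsetSum _ fun i _ => Continuous.log ?_ fun z => ?_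
      · exact continuous_finsetSum _ fun k _ => continuous_const.mul ((hcont k).pow 2)
      · exact ((aux_jensen R hR (fun k => deriv (σinv k) (R.mulVec z k))
          fun k => hdinv k _).1 i).ne'
    · exact continuous_finsetSum _ fun k _ =>
        Continuous.log ((hcont k).pow 2) fun z => pow_ne_zero 2 (hdinv k _).ne'
  have hnn : ∀ z, 0 ≤ cIMA (jacobian g z) := by
    intro z
    rw [hJ]
    have := (aux_jensen R hR (fun k => deriv (σinv k) (R.mulVec z k))
          fun k => hdinv k _).2.1
    linarith
  have hRR : R * Rᵀ = 1 := mul_eq_one_comm.1 hR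
  -- another nonzero entry in column `i`
  obtain ⟨k, hk0, hk⟩ : ∃ k, k ≠ 0 ∧ R k i ≠ 0 := by
    by_contra! hcon
    have hcol : ∑ k, (R k i) * (R k i) = 1 := by
      have := congrFun (congrFun hR i) i
      rw [Matrix.mul_apply] at this
      simpa using this
    rw [Finset.sum_eq_single 0 (fun k _ hk => by simp [hcon k hk]) (by simp)] at hcol
    have horth : ∑ k, (R k i) * (R k j) = 0 := by
      have := congrFun (congrFun hR i) j
      rw [Matrix.mul_apply] at this
      simpa [hij] using this
    rw [Finset.sum_eq_single 0 (fun k _ hk => by simp [hcon k hk]) (by simp)] at horth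
    exact (mul_ne_zero hRi hRj) horth
  obtain ⟨z, hz⟩ : ∃ z, cIMA (jacobian g z) ≠ 0 := by
    by_contra! hcon
    have hconst : ∀ t, deriv (σinv 0) t = deriv (σinv k) 0 := by
      intro t
      have h1 := hcon (Rᵀ.mulVec (Pi.single 0 t))
      rw [hJ] at h1
      have h2 := (aux_jensen R hR (fun k => deriv (σinv k)
        (R.mulVec (Rᵀ.mulVec (Pi.single 0 t)) k)) fun k => hdinv k _).2.2
        (by linarith) i 0 k hRi hk
      rw [Matrix.mulVec_mulVec, hRR, Matrix.one_mulVec] at h2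
      simpa [hk0] using h2
    obtain ⟨ε, hε, hball⟩ := Metric.isOpen_iff.1 hUopen _ hz
    have hy : z₁0 + ε / 2 ∈ U := hball (by
      rw [Metric.mem_ball, Real.dist_eq]
      rw [show z₁0 + ε / 2 - z₁0 = ε / 2 by ring, abs_of_pos (by linarith)]
      linarith)
    have hlt : z₁0 < z₁0 + ε / 2 := by linarith
    rcases hmono with h | h
    · have := h hz hy hlt
      rw [hconst, hconst] at this
      exact lt_irrefl _ this
    · have := h hz hy hlt
      rw [hconst, hconst] at this
      exact lt_irrefl _ this
  unfold CIMA
  exact integral_pos_of_integrable_nonneg_nonzero (x := z) (hcc.mul hpsm.continuous) hint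
    (fun z => mul_nonneg (hnn z) (hppos z).le) (mul_ne_zero hz (hppos z).ne')
end
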